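/- Let (R,m) be a Noetherian local ring and I an ideal of R. Let x_1,…,x_s,y be a minimal generating set of I, where J=(x_1,…,x_s) is a reduction of I with reduction number r_J(I) = 1. Suppose (a') x_1,…,x_s is a d-sequence, (b') ((x_1,…,x_{i-1}) : x_i) ∩ I = (x_1,…,x_{i-1}) for all i = 1,…,s, and (c') (x_1,…,x_{i-1}) ∩ I^2 = (x_1,…,x_{i-1})I for all i = 1,…,s−1. Then rt(I) = 2, there are isomorphisms of R-modules (Q/Q⟨1⟩)_2 ≅ (JI : y^2)/(J : y) = R/(J : y), and there is a form Y^2 − Σ_i X_i F_i ∈ Q_2, with F_i homogeneous of degree 1, such that Q = (Y^2 − Σ_i X_i F_i) + Q⟨1⟩. -/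

import Mathlib

open MvPolynomial

section Defs

variable {R : Type*} [CommRing R]

/-- The presentation of the Rees algebra of the ideal generated by `g`,
sending the `i`-th variable to `(g i) · t` inside `R[t]`. -/
noncomputable def reesPres {m : ℕ} (g : Fin m → R) :
    MvPolynomial (Fin m) R →ₐ[R] Polynomial R :=
  aeval fun i => Polynomial.C (g i) * Polynomial.X

/-- `Q`, the ideal of equations of the Rees algebra w.r.t. the generators `g`. -/
noncomputable def presKer {m : ℕ} (g : Fin m → R) : Ideal (MvPolynomial (Fin m) R) :=
  RingHom.ker (reesPres g)

/-- `Q⟨d⟩`, the subideal of `Q` generated by the homogeneous equations of degree at most `d`. -/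
noncomputable def presKerLe {m : ℕ} (g : Fin m → R) (d : ℕ) : Ideal (MvPolynomial (Fin m) R) :=
  Ideal.span {F | F ∈ presKer g ∧ ∃ k ≤ d, F.IsHomogeneous k}

/-- `Q_n`, the `R`-module of homogeneous equations of degree `n`. -/
noncomputable def presKerHomog {m : ℕ} (g : Fin m → R) (n : ℕ) :
    Submodule R (MvPolynomial (Fin m) R) :=
  homogeneousSubmodule (Fin m) R n ⊓ (presKer g).restrictScalars R

/-- `(Q/Q⟨n-1⟩)_n`, the degree-`n` part of `Q/Q⟨n-1⟩`. -/
abbrev presE {m : ℕ} (g : Fin m → R) (n : ℕ) :=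
  presKerHomog g n ⧸
    Submodule.comap (presKerHomog g n).subtype ((presKerLe g (n - 1)).restrictScalars R)

/-- A `d`-sequence: it minimally generates `(x₁,…,xₛ)`, and
`((x₁,…,xᵢ) : xᵢ₊₁xₖ) = ((x₁,…,xᵢ) : xₖ)` for all `0 ≤ i ≤ s-1`, `k ≥ i+1`. -/
def IsDSequence {s : ℕ} (x : Fin s → R) : Prop :=
  (∀ i : Fin s, Ideal.span (Set.range x) ≠ Ideal.span (x '' {j | j ≠ i})) ∧
  ∀ i k : Fin s, i ≤ k →
    (Ideal.span (x '' {j | j < i})).colon (Ideal.span {x i * x k})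
      = (Ideal.span (x '' {j | j < i})).colon (Ideal.span {x k})

end Defs

section Aux

variable {R : Type*} [CommRing R]

theorem aux_mem_colon (A : Ideal R) (b r : R) :
    r ∈ A.colon (Ideal.span {b} : Ideal R) ↔ r * b ∈ A := by
  rw [Submodule.mem_colon]
  constructor
  · intro h
    exact h b (Ideal.mem_span_singleton_self b)
  · intro h c hc
    obtain ⟨d, rfl⟩ := Ideal.mem_span_singleton'.mp hc
    have : r • (d * b) = d * (r * b) := by simp only [smul_eq_mul]; ring
    rw [this]
    exact A.mul_mem_left d h

theorem aux_span_succ {s : ℕ} (x : Fin s → R) (k : ℕ) (hk : k < s) :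
    Ideal.span (x '' {j | (j : ℕ) < k + 1}) =
      Ideal.span (x '' {j | (j : ℕ) < k}) ⊔ Ideal.span {x ⟨k, hk⟩} := by
  rw [← Ideal.span_union]
  congr 1
  ext a
  simp only [Set.mem_image, Set.mem_ofPred_eq, Set.mem_union, Set.mem_singleton_iff]
  constructor
  · rintro ⟨j, hj, rfl⟩
    rcases Nat.lt_succ_iff_lt_or_eq.mp hj with h | h
    · exact Or.inl ⟨j, h, rfl⟩
    · right; congr 1; exact Fin.ext h
  · rintro (⟨j, hj, rfl⟩ | rfl)
    · exact ⟨j, Nat.lt_succ_of_lt hj, rfl⟩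
    · exact ⟨⟨k, hk⟩, Nat.lt_succ_self k, rfl⟩

theorem aux_VV {s : ℕ} (x : Fin s → R) (I : Ideal R)
    (hI : I ^ 2 = Ideal.span (Set.range x) * I)
    (hb : ∀ (k : ℕ) (hk : k < s) (w : R), w ∈ I →
      x ⟨k, hk⟩ * w ∈ Ideal.span (x '' {j | (j : ℕ) < k}) →
      w ∈ Ideal.span (x '' {j | (j : ℕ) < k}))
    (hxI : ∀ j, x j ∈ I) (m : ℕ) :
    ∀ k, k ≤ s → Ideal.span (x '' {j | (j : ℕ) < k}) ⊓ I ^ (m + 1) ≤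
      Ideal.span (x '' {j | (j : ℕ) < k}) * I ^ m := by
  induction m with
  | zero => intro k _; simp
  | succ m ih =>
    intro k hk
    induction hk using Nat.decreasingInduction with
    | self =>
      have : x '' {j | (j : ℕ) < s} = Set.range x := by
        ext a; simp
      rw [this]
      refine inf_le_right.trans ?_
      rw [show m + 1 + 1 = 2 + m by ring, pow_add, hI, mul_assoc, ← pow_succ']
    | of_succ k hk ihk =>
      intro u hu
      have hu1 : u ∈ Ideal.span (x '' {j | (j : ℕ) < k + 1}) ⊓ I ^ (m + 1 + 1) := by
        refine ⟨?_, hu.2⟩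
        rw [aux_span_succ x k hk]
        exact Ideal.mem_sup_left hu.1
      have hu2 := ihk hu1
      rw [aux_span_succ x k hk, Ideal.sup_mul] at hu2
      obtain ⟨v, hv, z, hz, rfl⟩ := Submodule.mem_sup.mp hu2
      obtain ⟨w, hw, rfl⟩ := Ideal.mem_span_singleton_mul.mp hz
      have hv' : v ∈ Ideal.span (x '' {j | (j : ℕ) < k}) := Ideal.mul_le_left hv
      have hxw := (Ideal.add_mem_iff_right _ hv').mp hu.1
      have hwI : w ∈ I := Ideal.pow_le_self (Nat.succ_ne_zero m) hw
      have h3 := ih k hk.le ⟨hb k hk w hwI hxw, hw⟩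
      refine Ideal.add_mem _ hv ?_
      rw [pow_succ', mul_left_comm]
      exact Ideal.mul_mem_mul (hxI _) h3

theorem aux_pres_homog {m : ℕ} (g : Fin m → R) {F : MvPolynomial (Fin m) R} {n : ℕ}
    (hF : F.IsHomogeneous n) :
    reesPres g F = Polynomial.C (eval g F) * Polynomial.X ^ n := by
  unfold reesPres
  conv_lhs => rw [F.as_sum]
  conv_rhs => rw [F.as_sum]
  simp only [map_sum, Finset.sum_mul]
  refine Finset.sum_congr rfl fun d hd => ?_
  have hd2 := hF.degree_eq_sum_deg_support hd
  rw [aeval_monomial, eval_monomial, hd2]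
  simp only [Finsupp.prod, mul_pow, Finset.prod_mul_distrib, Finset.prod_pow_eq_pow_sum]
  simp [Polynomial.algebraMap_eq, mul_assoc]

theorem aux_mem_pres {m : ℕ} (g : Fin m → R) {F : MvPolynomial (Fin m) R} {n : ℕ}
    (hF : F.IsHomogeneous n) : F ∈ presKer g ↔ eval g F = 0 := by
  rw [presKer, RingHom.mem_ker]
  change reesPres g F = 0 ↔ _
  rw [aux_pres_homog g hF, Polynomial.C_mul_X_pow_eq_monomial, Polynomial.monomial_eq_zero_iff]

theorem aux_comp_mem {m : ℕ} (g : Fin m → R) {F : MvPolynomial (Fin m) R}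
    (hF : F ∈ presKer g) (n : ℕ) : homogeneousComponent n F ∈ presKer g := by
  rw [aux_mem_pres g (homogeneousComponent_isHomogeneous n F)]
  have h : reesPres g F = 0 := hF
  by_cases hn : F.totalDegree < n
  · rw [homogeneousComponent_eq_zero _ _ hn, map_zero]
  rw [← sum_homogeneousComponent F, map_sum] at h
  have h2 := congrArg (fun p => Polynomial.coeff p n) h
  simp only [Polynomial.finsetSum_coeff, Polynomial.coeff_zero] at h2
  rw [Finset.sum_congr rfl (fun i _ => by
    rw [aux_pres_homog g (homogeneousComponent_isHomogeneous i F),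
      Polynomial.coeff_C_mul_X_pow])] at h2
  rw [Finset.sum_ite_eq, if_pos (by simp; omega)] at h2
  exact h2

theorem aux_pres_le {m : ℕ} (g : Fin m → R) (A : Ideal (MvPolynomial (Fin m) R))
    (h : ∀ n F, F.IsHomogeneous n → F ∈ presKer g → F ∈ A) : presKer g ≤ A := by
  intro F hF
  rw [← sum_homogeneousComponent F]
  exact Ideal.sum_mem _ fun i _ => h i _ (homogeneousComponent_isHomogeneous i F)
    (aux_comp_mem g hF i)

theorem aux_presLe_le {m : ℕ} (g : Fin m → R) (d : ℕ) : presKerLe g d ≤ presKer g :=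
  Ideal.span_le.mpr fun _ h => h.1

theorem aux_span_repr {s : ℕ} (x : Fin s → R) (k : ℕ) (a : R)
    (ha : a ∈ Ideal.span (x '' {j | (j : ℕ) < k})) :
    ∃ c : Fin s → R, (∀ i : Fin s, k ≤ (i : ℕ) → c i = 0) ∧ a = ∑ i, x i * c i := by
  induction ha using Submodule.span_induction with
  | mem a h =>
    obtain ⟨j, hj, rfl⟩ := h
    refine ⟨Pi.single j 1, fun i hi => ?_, ?_⟩
    · rw [Pi.single_eq_of_ne]
      rintro rfl
      exact absurd hj (not_lt.mpr hi)
    · simp [Pi.single_apply]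
  | zero => exact ⟨0, by simp, by simp⟩
  | add a b _ _ h1 h2 =>
    obtain ⟨c, hc, rfl⟩ := h1
    obtain ⟨d, hd, rfl⟩ := h2
    refine ⟨c + d, fun i hi => by simp [hc i hi, hd i hi], ?_⟩
    simp [mul_add, Finset.sum_add_distrib]
  | smul r a _ h =>
    obtain ⟨c, hc, rfl⟩ := h
    refine ⟨fun i => r * c i, fun i hi => by simp [hc i hi], ?_⟩
    rw [smul_eq_mul, Finset.mul_sum]
    exact Finset.sum_congr rfl fun i _ => by ring

theorem aux_repr {s t : ℕ} (x : Fin s → R) (g : Fin t → R) (k m : ℕ) (u : R)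
    (hu : u ∈ Ideal.span (x '' {j | (j : ℕ) < k}) * Ideal.span (Set.range g) ^ m) :
    ∃ H : Fin s → MvPolynomial (Fin t) R, (∀ i, (H i).IsHomogeneous m) ∧
      (∀ i : Fin s, k ≤ (i : ℕ) → H i = 0) ∧ u = ∑ i, x i * eval g (H i) := by
  induction hu using Submodule.mul_induction_on' with
  | mem_mul_mem a ha b hb =>
    obtain ⟨c, hc, rfl⟩ := aux_span_repr x k a ha
    obtain ⟨p, hp, rfl⟩ := (Ideal.mem_span_pow_iff_exists_isHomogeneous g b).mp hb
    refine ⟨fun i => C (c i) * p, fun i => hp.C_mul _, fun i hi => by simp [hc i hi], ?_⟩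
    rw [Finset.sum_mul]
    exact Finset.sum_congr rfl fun i _ => by simp; ring
  | add a _ b _ h1 h2 =>
    obtain ⟨c, hh, hc, rfl⟩ := h1
    obtain ⟨d, hh', hd, rfl⟩ := h2
    refine ⟨c + d, fun i => (hh i).add (hh' i), fun i hi => by simp [hc i hi, hd i hi], ?_⟩
    simp [mul_add, Finset.sum_add_distrib]

theorem aux_descent {s : ℕ} (g : Fin (s + 1) → R) (x : Fin s → R)
    (hx : ∀ i, g i.castSucc = x i) (I : Ideal R) (hI : I = Ideal.span (Set.range g))
    (hb : ∀ (k : ℕ) (hk : k < s) (w : R), w ∈ I →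
      x ⟨k, hk⟩ * w ∈ Ideal.span (x '' {j | (j : ℕ) < k}) →
      w ∈ Ideal.span (x '' {j | (j : ℕ) < k}))
    (hVV : ∀ m k, k ≤ s → Ideal.span (x '' {j | (j : ℕ) < k}) ⊓ I ^ (m + 1) ≤
      Ideal.span (x '' {j | (j : ℕ) < k}) * I ^ m)
    (A : Ideal (MvPolynomial (Fin (s + 1)) R)) (m : ℕ)
    (hA : ∀ F : MvPolynomial (Fin (s + 1)) R, F.IsHomogeneous (m + 1) → F ∈ presKer g → F ∈ A)
    (k : ℕ) : k ≤ s → ∀ P : Fin s → MvPolynomial (Fin (s + 1)) R,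
      (∀ i, (P i).IsHomogeneous (m + 1)) → (∀ i : Fin s, k ≤ (i : ℕ) → P i = 0) →
      ∑ i, x i * eval g (P i) = 0 → ∑ i : Fin s, X i.castSucc * P i ∈ A := by
  induction k with
  | zero =>
    intro _ P _ h _
    simp [h]
  | succ k ih =>
    intro hk P hP h0 hs
    have hk' : k < s := hk
    set j : Fin s := ⟨k, hk'⟩ with hj
    have hu : eval g (P j) ∈ I ^ (m + 1) := by
      rw [hI]
      exact (Ideal.mem_span_pow_iff_exists_isHomogeneous g _).mpr ⟨P j, hP j, rfl⟩
    have hxu : x j * eval g (P j) ∈ Ideal.span (x '' {j | (j : ℕ) < k}) := by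
      rw [← Finset.add_sum_erase _ _ (Finset.mem_univ j)] at hs
      rw [eq_neg_of_add_eq_zero_left hs]
      refine neg_mem (Ideal.sum_mem _ fun i hi => ?_)
      have hne := Finset.ne_of_mem_erase hi
      by_cases h : (i : ℕ) < k
      · exact Ideal.mul_mem_right _ _ (Ideal.subset_span ⟨i, h, rfl⟩)
      · have : (i : ℕ) ≠ k := fun h => hne (Fin.ext h)
        rw [h0 i (by omega)]
        simp
    have hu2 := hVV m k hk'.le ⟨hb k hk' _ (Ideal.pow_le_self (Nat.succ_ne_zero m) hu) hxu, hu⟩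
    rw [hI] at hu2
    obtain ⟨H, hH, hH0, hHe⟩ := aux_repr x g k m _ hu2
    have hXH : (∑ i : Fin s, X i.castSucc * H i).IsHomogeneous (m + 1) := by
      refine IsHomogeneous.sum _ _ _ fun i _ => ?_
      exact add_comm 1 m ▸ (isHomogeneous_X _ _).mul (hH i)
    have hD : P j - ∑ i : Fin s, X i.castSucc * H i ∈ A := by
      have hh := (hP j).sub hXH
      refine hA _ hh ((aux_mem_pres g hh).mpr ?_)
      simp [hHe, hx]
    set P' : Fin s → MvPolynomial (Fin (s + 1)) R :=
      fun i => if i = j then 0 else P i + X j.castSucc * H i with hP'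
    have hHj : H j = 0 := hH0 j le_rfl
    have key : ∑ i : Fin s, X i.castSucc * P i =
        X j.castSucc * (P j - ∑ i : Fin s, X i.castSucc * H i)
          + ∑ i : Fin s, X i.castSucc * P' i := by
      have h1 : ∀ i : Fin s, X i.castSucc * P' i = X i.castSucc * P i
          + X j.castSucc * (X i.castSucc * H i) - if i = j then X j.castSucc * P j else 0 := by
        intro i
        simp only [hP']
        split_ifs with h
        · subst h; rw [hHj]; ring
        · ring
      simp only [h1, Finset.sum_sub_distrib, Finset.sum_add_distrib, ← Finset.mul_sum,
        Finset.sum_ite_eq', Finset.mem_univ, if_true]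
      ring
    have hev : ∑ i, x i * eval g (P' i) = 0 := by
      have h2 := congrArg (eval g) key
      simp only [map_add, map_sum, map_mul, map_sub, eval_X, hx, hs, ← hHe, sub_self, mul_zero,
        zero_add] at h2
      exact h2.symm
    rw [key]
    refine A.add_mem (A.mul_mem_left _ hD) (ih hk'.le P' ?_ ?_ hev)
    · intro i
      simp only [hP']
      split_ifs with h
      · exact isHomogeneous_zero _ _ _
      · refine (hP i).add ?_
        exact add_comm 1 m ▸ (isHomogeneous_X _ _).mul (hH i)
    · intro i hi
      simp only [hP']
      split_ifs with h
      · rfl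
      · have : (i : ℕ) ≠ k := fun h' => h (Fin.ext h')
        rw [h0 i (by omega), hH0 i hi]; simp

theorem aux_decomp {s : ℕ} (n : ℕ) (F : MvPolynomial (Fin (s + 1)) R)
    (hF : F.IsHomogeneous (n + 1)) :
    ∃ (c : R) (P : Fin s → MvPolynomial (Fin (s + 1)) R), (∀ i, (P i).IsHomogeneous n) ∧
      F = C c * X (Fin.last s) ^ (n + 1) + ∑ i : Fin s, X i.castSucc * P i := by
  rw [F.as_sum]
  refine Finset.sum_induction _ (fun F => ∃ (c : R) (P : Fin s → MvPolynomial (Fin (s + 1)) R),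
    (∀ i, (P i).IsHomogeneous n) ∧
      F = C c * X (Fin.last s) ^ (n + 1) + ∑ i : Fin s, X i.castSucc * P i) ?_ ?_ ?_
  · rintro _ _ ⟨c, P, hP, rfl⟩ ⟨d, Q, hQ, rfl⟩
    refine ⟨c + d, P + Q, fun i => (hP i).add (hQ i), ?_⟩
    simp only [map_add, Pi.add_apply, mul_add, Finset.sum_add_distrib]
    ring
  · exact ⟨0, 0, fun i => isHomogeneous_zero _ _ _, by simp⟩
  · intro d hd
    have hdeg : d.degree = n + 1 := (hF.degree_eq_sum_deg_support hd).symm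
    by_cases h : ∃ i : Fin s, d i.castSucc ≠ 0
    · obtain ⟨i, hi⟩ := h
      have hle : Finsupp.single i.castSucc 1 ≤ d := by
        rw [Finsupp.single_le_iff]; omega
      have hd' : Finsupp.single i.castSucc 1 + (d - Finsupp.single i.castSucc 1) = d :=
        add_tsub_cancel_of_le hle
      have hdeg' : (d - Finsupp.single i.castSucc 1).degree = n := by
        have := congrArg Finsupp.degree hd'
        rw [map_add, hdeg, Finsupp.degree_single] at this
        omega
      refine ⟨0, Pi.single i (monomial (d - Finsupp.single i.castSucc 1) (coeff d F)), ?_, ?_⟩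
      · intro i'
        by_cases h : i' = i
        · subst h; rw [Pi.single_eq_same]; exact isHomogeneous_monomial _ hdeg'
        · rw [Pi.single_eq_of_ne h]; exact isHomogeneous_zero _ _ _
      · rw [Finset.sum_eq_single i (fun b _ hb => by rw [Pi.single_eq_of_ne hb, mul_zero])
          (by simp), Pi.single_eq_same, X, X, monomial_mul, hd']
        simp
    · push Not at h
      have hd' : d = Finsupp.single (Fin.last s) (n + 1) := by
        have h1 : d = Finsupp.single (Fin.last s) (d (Fin.last s)) := by
          ext i
          refine Fin.lastCases ?_ (fun i => ?_) i
          · simp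
          · rw [h i, Finsupp.single_eq_of_ne]
            exact (Fin.castSucc_lt_last i).ne
        rw [h1, Finsupp.degree_single] at hdeg
        rw [h1, hdeg]
      refine ⟨coeff d F, 0, fun i => isHomogeneous_zero _ _ _, ?_⟩
      rw [C_mul_X_pow_eq_monomial, ← hd']
      simp

/-- set all variables but the last to zero -/
noncomputable def auxPsi (R : Type*) [CommRing R] (s : ℕ) :
    MvPolynomial (Fin (s + 1)) R →ₐ[R] Polynomial R :=
  aeval (Fin.snoc (fun _ : Fin s => (0 : Polynomial R)) Polynomial.X)

theorem auxPsi_last (s : ℕ) : auxPsi R s (X (Fin.last s)) = Polynomial.X := by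
  simp [auxPsi]

theorem auxPsi_castSucc {s : ℕ} (i : Fin s) : auxPsi R s (X i.castSucc) = 0 := by
  simp [auxPsi]

theorem auxPsi_decomp {s : ℕ} (c : R) (n : ℕ) (P : Fin s → MvPolynomial (Fin (s + 1)) R) :
    auxPsi R s (C c * X (Fin.last s) ^ n + ∑ i : Fin s, X i.castSucc * P i)
      = Polynomial.C c * Polynomial.X ^ n := by
  have : auxPsi R s (C c) = Polynomial.C c := by simp [auxPsi]
  simp [auxPsi_last, auxPsi_castSucc, this]

theorem auxPsi_presLe {s : ℕ} (x : Fin s → R) (y : R) (J : Ideal R)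
    (hJ : J = Ideal.span (Set.range x)) {F : MvPolynomial (Fin (s + 1)) R}
    (hF : F ∈ presKerLe (Fin.snoc x y) 1) (n : ℕ) :
    (auxPsi R s F).coeff n ∈ J.colon (Ideal.span {y} : Ideal R) := by
  have h : presKerLe (Fin.snoc x y : Fin (s + 1) → R) 1 ≤
      Ideal.comap (auxPsi R s).toRingHom
        (Ideal.map Polynomial.C (J.colon (Ideal.span {y} : Ideal R))) := by
    refine Ideal.span_le.mpr ?_
    rintro G ⟨hG, k, hk, hGk⟩
    rw [aux_mem_pres _ hGk] at hG
    rw [SetLike.mem_coe, Ideal.mem_comap]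
    change auxPsi R s G ∈ _
    interval_cases k
    · have h0 := (totalDegree_zero_iff_isHomogeneous (p := G)).mpr hGk
      rw [totalDegree_eq_zero_iff_eq_C] at h0
      rw [h0, eval_C] at hG
      rw [h0, hG]; simp
    · obtain ⟨c, P, hP, rfl⟩ := aux_decomp 0 G hGk
      rw [auxPsi_decomp]
      refine Ideal.mul_mem_right _ _ (Ideal.mem_map_of_mem _ ?_)
      rw [aux_mem_colon]
      simp only [map_add, map_mul, eval_C, map_pow, eval_X, Fin.snoc_last, map_sum,
        Fin.snoc_castSucc, zero_add, pow_one] at hG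
      rw [eq_neg_of_add_eq_zero_left hG, hJ]
      exact neg_mem (Ideal.sum_mem _ fun i _ => Ideal.mul_mem_right _ _
        (Ideal.subset_span ⟨i, rfl⟩))
  exact Ideal.mem_map_C_iff.mp (h hF) n

end Aux

/-- Reduction number one case: `rt(I) = 2`,
`(Q/Q⟨1⟩)₂ ≅ (JI : y²)/(J : y) = R/(J : y)`, and `Q = (Y² − ∑ Xᵢ Fᵢ) + Q⟨1⟩`. -/
theorem statement4 {R : Type*} [CommRing R] [IsNoetherianRing R] [IsLocalRing R]
    (I : Ideal R) {s : ℕ} (x : Fin s → R) (y : R)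
    (J : Ideal R) (hJ : J = Ideal.span (Set.range x))
    (hgen : I = Ideal.span (Set.range (Fin.snoc x y)))
    (hmin : ∀ i : Fin (s + 1), I ≠ Ideal.span (Fin.snoc x y '' {j | j ≠ i}))
    (hred : IsLeast {k : ℕ | I ^ (k + 1) = J * I ^ k} 1)
    (ha : IsDSequence x)
    (hb : ∀ i : Fin s,
      (Ideal.span (x '' {j | j < i})).colon (Ideal.span {x i}) ⊓ I
        = Ideal.span (x '' {j | j < i}))
    (hc : ∀ i : ℕ, 1 ≤ i → i ≤ s - 1 →
      Ideal.span (x '' {j | (j : ℕ) < i - 1}) ⊓ I ^ 2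
        = Ideal.span (x '' {j | (j : ℕ) < i - 1}) * I) :
    IsLeast {N : ℕ | 1 ≤ N ∧ presKer (Fin.snoc x y) = presKerLe (Fin.snoc x y) N} 2 ∧
    Nonempty (presE (Fin.snoc x y) 2 ≃ₗ[R]
      (((J * I).colon (Ideal.span {y ^ 2})) ⧸
        Submodule.comap ((J * I).colon (Ideal.span {y ^ 2})).subtype
          (J.colon (Ideal.span {y})))) ∧
    (J * I).colon (Ideal.span {y ^ 2}) = ⊤ ∧
    Nonempty (presE (Fin.snoc x y) 2 ≃ₗ[R] (R ⧸ J.colon (Ideal.span {y}))) ∧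
    ∃ F : Fin s → MvPolynomial (Fin (s + 1)) R, (∀ i, (F i).IsHomogeneous 1) ∧
      (X (Fin.last s) ^ 2 - ∑ i, X i.castSucc * F i) ∈ presKer (Fin.snoc x y) ∧
      presKer (Fin.snoc x y)
        = Ideal.span {X (Fin.last s) ^ 2 - ∑ i, X i.castSucc * F i}
            ⊔ presKerLe (Fin.snoc x y) 1 := by
  have hI2 : I ^ 2 = J * I := by
    have := hred.1
    simpa using this
  have hxg : ∀ i : Fin s, (Fin.snoc x y : Fin (s + 1) → R) i.castSucc = x i := by
    intro i; simp
  have hxI : ∀ j, x j ∈ I := by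
    intro j
    rw [hgen, ← hxg j]
    exact Ideal.subset_span ⟨_, rfl⟩
  have hyI : y ∈ I := by
    rw [hgen]
    exact Ideal.subset_span ⟨Fin.last s, by simp⟩
  have hJI : J ≤ I := by
    rw [hJ, Ideal.span_le]
    rintro _ ⟨j, rfl⟩
    exact hxI j
  have hyJ : y ∉ J := by
    intro hy
    have hIJ : I ≤ J := by
      rw [hgen, Ideal.span_le]
      rintro _ ⟨j, rfl⟩
      refine Fin.lastCases ?_ (fun i => ?_) j
      · simpa using hy
      · rw [hxg, hJ]
        exact Ideal.subset_span ⟨i, rfl⟩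
    have h0 : (0 : ℕ) ∈ {k : ℕ | I ^ (k + 1) = J * I ^ k} := by
      simp [le_antisymm hIJ hJI]
    have := hred.2 h0
    omega
  have hfull : x '' {j | (j : ℕ) < s} = Set.range x := by
    ext a; simp
  have hb' : ∀ (k : ℕ) (hk : k < s) (w : R), w ∈ I →
      x ⟨k, hk⟩ * w ∈ Ideal.span (x '' {j | (j : ℕ) < k}) →
      w ∈ Ideal.span (x '' {j | (j : ℕ) < k}) := by
    intro k hk w hw h
    have h2 := hb ⟨k, hk⟩
    have h3 : {j : Fin s | j < ⟨k, hk⟩} = {j : Fin s | (j : ℕ) < k} := rfl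
    rw [h3] at h2
    rw [← h2]
    refine ⟨?_, hw⟩
    rw [SetLike.mem_coe, aux_mem_colon, mul_comm]
    exact h
  have hVV := aux_VV x I (by rw [hI2, hJ]) hb' hxI
  have hy2 : y ^ 2 ∈ J * I := by
    rw [← hI2]; exact Ideal.pow_mem_pow hyI 2
  have htop : (J * I).colon (Ideal.span {y ^ 2}) = ⊤ := by
    rw [Ideal.eq_top_iff_one, aux_mem_colon, one_mul]
    exact hy2
  have hdesc := aux_descent (Fin.snoc x y) x hxg I hgen hb' hVV
  -- the quadratic equation
  obtain ⟨F, hF, -, hFe⟩ := aux_repr x (Fin.snoc x y : Fin (s + 1) → R) s 1 (y ^ 2) (by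
    rw [hfull, ← hJ, pow_one, ← hgen]; exact hy2)
  have hGh : (X (Fin.last s) ^ 2 - ∑ i : Fin s, X i.castSucc * F i :
      MvPolynomial (Fin (s + 1)) R).IsHomogeneous 2 :=
    (isHomogeneous_X_pow _ _).sub
      (IsHomogeneous.sum _ _ _ fun i _ => (isHomogeneous_X _ _).mul (hF i))
  have hGQ : (X (Fin.last s) ^ 2 - ∑ i : Fin s, X i.castSucc * F i) ∈
      presKer (Fin.snoc x y : Fin (s + 1) → R) := by
    rw [aux_mem_pres _ hGh]
    simp only [map_sub, map_pow, eval_X, map_sum, map_mul, hxg, Fin.snoc_last, ← hFe, sub_self]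
  have hlow : ∀ n, n ≤ 1 → ∀ P : MvPolynomial (Fin (s + 1)) R, P.IsHomogeneous n →
      P ∈ presKer (Fin.snoc x y : Fin (s + 1) → R) →
      P ∈ presKerLe (Fin.snoc x y : Fin (s + 1) → R) 1 :=
    fun n hn P hP hPQ => Ideal.subset_span ⟨hPQ, n, hn, hP⟩
  have key1 : ∀ P : MvPolynomial (Fin (s + 1)) R, P.IsHomogeneous 2 →
      P ∈ presKer (Fin.snoc x y : Fin (s + 1) → R) →
      (auxPsi R s P).coeff 2 ∈ J.colon (Ideal.span {y} : Ideal R) →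
      P ∈ presKerLe (Fin.snoc x y : Fin (s + 1) → R) 1 := by
    intro P hP hPQ hc2
    obtain ⟨c, T, hT, rfl⟩ := aux_decomp 1 P hP
    rw [auxPsi_decomp, aux_mem_colon] at hc2
    simp only [Polynomial.coeff_C_mul, Polynomial.coeff_X_pow, if_true, mul_one,
      Nat.reduceAdd] at hc2
    rw [hJ, ← hfull] at hc2
    obtain ⟨a, -, hca⟩ := aux_span_repr x s _ hc2
    have hLh : (C c * X (Fin.last s) - ∑ i : Fin s, X i.castSucc * C (a i) :
        MvPolynomial (Fin (s + 1)) R).IsHomogeneous 1 :=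
      (isHomogeneous_C_mul_X _ _).sub
        (IsHomogeneous.sum _ _ _ fun i _ => (isHomogeneous_X _ _).mul (isHomogeneous_C _ _))
    have hLQ : (C c * X (Fin.last s) - ∑ i : Fin s, X i.castSucc * C (a i)) ∈
        presKer (Fin.snoc x y : Fin (s + 1) → R) := by
      rw [aux_mem_pres _ hLh]
      simp only [map_sub, eval_X, map_sum, map_mul, hxg, Fin.snoc_last, eval_C, hca, sub_self]
    have hL := hlow 1 le_rfl _ hLh hLQ
    have heq : (C c * X (Fin.last s) ^ (1 + 1) + ∑ i : Fin s, X i.castSucc * T i :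
        MvPolynomial (Fin (s + 1)) R) =
        X (Fin.last s) * (C c * X (Fin.last s) - ∑ i : Fin s, X i.castSucc * C (a i))
        + ∑ i : Fin s, X i.castSucc * (T i + X (Fin.last s) * C (a i)) := by
      have : ∀ i : Fin s, (X i.castSucc * (T i + X (Fin.last s) * C (a i)) :
          MvPolynomial (Fin (s + 1)) R) =
          X i.castSucc * T i + X (Fin.last s) * (X i.castSucc * C (a i)) := fun i => by ring
      simp only [this, Finset.sum_add_distrib, ← Finset.mul_sum]
      ring
    rw [aux_mem_pres _ hP, heq] at hPQ
    rw [aux_mem_pres _ hLh] at hLQ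
    rw [map_add, map_mul, hLQ, mul_zero, zero_add, map_sum] at hPQ
    simp only [map_mul, eval_X, hxg] at hPQ
    rw [heq]
    refine Ideal.add_mem _ (Ideal.mul_mem_left _ _ hL) ?_
    refine hdesc _ 0 (hlow 1 le_rfl) s le_rfl _ ?_ ?_ hPQ
    · intro i
      exact (hT i).add ((isHomogeneous_X _ _).mul (isHomogeneous_C _ _))
    · intro i hi
      exact absurd i.2 (not_lt.mpr hi)
  have key2 : presKer (Fin.snoc x y : Fin (s + 1) → R) ≤
      Ideal.span {X (Fin.last s) ^ 2 - ∑ i : Fin s, X i.castSucc * F i}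
        ⊔ presKerLe (Fin.snoc x y : Fin (s + 1) → R) 1 := by
    refine aux_pres_le _ _ fun n => ?_
    induction n with
    | zero => exact fun P hP hPQ => Ideal.mem_sup_right (hlow 0 (by omega) P hP hPQ)
    | succ n ih =>
      intro P hP hPQ
      rcases Nat.eq_zero_or_pos n with rfl | hn
      · exact Ideal.mem_sup_right (hlow _ (by omega) P hP hPQ)
      obtain ⟨m, rfl⟩ : ∃ m, n = m + 1 := ⟨n - 1, by omega⟩
      obtain ⟨c, T, hT, rfl⟩ := aux_decomp _ P hP
      have heq : (C c * X (Fin.last s) ^ (m + 1 + 1) + ∑ i : Fin s, X i.castSucc * T i :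
          MvPolynomial (Fin (s + 1)) R) =
          C c * X (Fin.last s) ^ m * (X (Fin.last s) ^ 2 - ∑ i : Fin s, X i.castSucc * F i)
          + ∑ i : Fin s, X i.castSucc * (T i + C c * X (Fin.last s) ^ m * F i) := by
        have : ∀ i : Fin s, (X i.castSucc * (T i + C c * X (Fin.last s) ^ m * F i) :
            MvPolynomial (Fin (s + 1)) R) =
            X i.castSucc * T i + C c * X (Fin.last s) ^ m * (X i.castSucc * F i) :=
          fun i => by ring
        simp only [this, Finset.sum_add_distrib, ← Finset.mul_sum]
        ring
      have hGe := hGQ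
      rw [aux_mem_pres _ hGh] at hGe
      rw [aux_mem_pres _ hP, heq] at hPQ
      rw [map_add, map_mul _ _ (_ - _), hGe, mul_zero, zero_add, map_sum] at hPQ
      simp only [map_mul _ (X _) _, eval_X, hxg] at hPQ
      rw [heq]
      refine Ideal.add_mem _ (Ideal.mul_mem_left _ _
        (Ideal.mem_sup_left (Ideal.mem_span_singleton_self _))) ?_
      refine hdesc _ m ih s le_rfl _ ?_ ?_ hPQ
      · intro i
        exact (hT i).add ((isHomogeneous_C_mul_X_pow _ _ _).mul (hF i))
      · intro i hi
        exact absurd i.2 (not_lt.mpr hi)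
  have hQeq : presKer (Fin.snoc x y : Fin (s + 1) → R) =
      Ideal.span {X (Fin.last s) ^ 2 - ∑ i : Fin s, X i.castSucc * F i}
        ⊔ presKerLe (Fin.snoc x y : Fin (s + 1) → R) 1 := by
    refine le_antisymm key2 (sup_le ?_ (aux_presLe_le _ _))
    rw [Ideal.span_le, Set.singleton_subset_iff]
    exact hGQ
  have hGpsi : (auxPsi R s (X (Fin.last s) ^ 2 - ∑ i : Fin s, X i.castSucc * F i)).coeff 2
      = 1 := by
    simp [auxPsi_last, auxPsi_castSucc]
  -- the isomorphism
  let f : presKerHomog (Fin.snoc x y : Fin (s + 1) → R) 2 →ₗ[R]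
      (R ⧸ J.colon (Ideal.span {y} : Ideal R)) :=
    (Submodule.mkQ (J.colon (Ideal.span {y} : Ideal R))) ∘ₗ (Polynomial.lcoeff R 2) ∘ₗ
      (auxPsi R s).toLinearMap ∘ₗ (presKerHomog (Fin.snoc x y : Fin (s + 1) → R) 2).subtype
  have hf : ∀ P, f P = Submodule.Quotient.mk ((auxPsi R s P.1).coeff 2) := fun P => rfl
  have hfsurj : Function.Surjective f := by
    intro q
    obtain ⟨r, rfl⟩ := Submodule.Quotient.mk_surjective _ q
    refine ⟨r • ⟨X (Fin.last s) ^ 2 - ∑ i : Fin s, X i.castSucc * F i, hGh, hGQ⟩, ?_⟩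
    rw [map_smul, hf, hGpsi, ← Submodule.Quotient.mk_smul, smul_eq_mul, mul_one]
  have hfker : LinearMap.ker f =
      Submodule.comap (presKerHomog (Fin.snoc x y : Fin (s + 1) → R) 2).subtype
        ((presKerLe (Fin.snoc x y : Fin (s + 1) → R) (2 - 1)).restrictScalars R) := by
    ext P
    rw [LinearMap.mem_ker, hf, Submodule.Quotient.mk_eq_zero]
    change _ ↔ P.1 ∈ presKerLe (Fin.snoc x y : Fin (s + 1) → R) 1
    exact ⟨key1 P.1 P.2.1 P.2.2, fun h => auxPsi_presLe x y J hJ h 2⟩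
  have e1 : presE (Fin.snoc x y : Fin (s + 1) → R) 2 ≃ₗ[R]
      (R ⧸ J.colon (Ideal.span {y} : Ideal R)) :=
    (Submodule.quotEquivOfEq _ _ hfker.symm).trans (f.quotKerEquivOfSurjective hfsurj)
  let f2 : ((J * I).colon (Ideal.span {y ^ 2} : Ideal R)) →ₗ[R]
      (R ⧸ J.colon (Ideal.span {y} : Ideal R)) :=
    (Submodule.mkQ (J.colon (Ideal.span {y} : Ideal R))) ∘ₗ
      ((J * I).colon (Ideal.span {y ^ 2} : Ideal R)).subtype
  have hf2surj : Function.Surjective f2 := by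
    intro q
    obtain ⟨r, rfl⟩ := Submodule.Quotient.mk_surjective _ q
    exact ⟨⟨r, by rw [htop]; trivial⟩, rfl⟩
  have hf2ker : LinearMap.ker f2 =
      Submodule.comap ((J * I).colon (Ideal.span {y ^ 2} : Ideal R)).subtype
          (J.colon (Ideal.span {y} : Ideal R)) := by
    rw [LinearMap.ker_comp, Submodule.ker_mkQ]
  have e2 := (Submodule.quotEquivOfEq _ _ hf2ker.symm).trans (f2.quotKerEquivOfSurjective hf2surj)
  refine ⟨⟨⟨by norm_num, ?_⟩, ?_⟩, ⟨e1.trans e2.symm⟩, htop, ⟨e1⟩, F, hF, hGQ, hQeq⟩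
  · refine le_antisymm (hQeq.le.trans (sup_le ?_ ?_)) (aux_presLe_le _ _)
    · rw [Ideal.span_le, Set.singleton_subset_iff]
      exact Ideal.subset_span ⟨hGQ, 2, le_rfl, hGh⟩
    · exact Ideal.span_mono fun P hP => ⟨hP.1, hP.2.choose, by
        have := hP.2.choose_spec.1; omega, hP.2.choose_spec.2⟩
  · rintro N ⟨hN1, hN⟩
    by_contra hlt
    obtain rfl : N = 1 := by omega
    have h1 := hGQ
    rw [hN] at h1
    have h2 := auxPsi_presLe x y J hJ h1 2
    rw [hGpsi, aux_mem_colon, one_mul] at h2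
    exact hyJ h2
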